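/- arXiv:1208.0446 — 3 statements merged into one kernel-verified Lean document; each statement's English description precedes it below -/
import Mathlib

section
/- Let g : ℝⁿ → ℝⁿ be convex, order-preserving and additively homogeneous with at least one harmonic vector, and let C be its set of critical nodes. For every super-harmonic vector u there exists a unique harmonic vector v such that v_i = u_i for all i ∈ C, and this v equals lim_{k→∞} g^k(u). -/
open Filter Topology

/-- The subdifferential of a (convex) self-map `g` of `ℝⁿ` at `u`: the set of matrices `M`
such that `g(x) − g(u) ≥ M(x − u)` componentwise for all `x`. -/
def Subdiff {n : ℕ} (g : (Fin n → ℝ) → (Fin n → ℝ)) (u : Fin n → ℝ) :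
    Set (Matrix (Fin n) (Fin n) ℝ) :=
  {M | ∀ (x : Fin n → ℝ) (i : Fin n), g u i + M.mulVec (x - u) i ≤ g x i}

/-- `F` is a recurrence class of the matrix `M`: a (strongly connected, arc-closed)
strongly connected component of the digraph with an arc `(i,j)` whenever `M i j > 0`,
such that every row of the `F×F` submatrix of `M` sums to `1`. -/
def IsRecClass {n : ℕ} (M : Matrix (Fin n) (Fin n) ℝ) (F : Finset (Fin n)) : Prop :=
  F.Nonempty ∧
  (∀ i ∈ F, ∀ j ∈ F, Relation.ReflTransGen (fun a b => 0 < M a b) i j) ∧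
  (∀ i ∈ F, ∀ j, 0 < M i j → j ∈ F) ∧
  (∀ i ∈ F, ∑ j ∈ F, M i j = 1)

/-- `i` is a critical node of `g`: `i` belongs to a recurrence class of some matrix in the
subdifferential of `g` at some harmonic vector of `g` (this does not depend on the choice
of the harmonic vector). -/
def IsCritical {n : ℕ} (g : (Fin n → ℝ) → (Fin n → ℝ)) (i : Fin n) : Prop :=
  ∃ u₀ : Fin n → ℝ, g u₀ = u₀ ∧
    ∃ M ∈ Subdiff g u₀, ∃ F : Finset (Fin n), IsRecClass M F ∧ i ∈ F

/-!
Monotonicity and additive homogeneity make every matrix in the subdifferential of `g`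
row-stochastic. If `w` is harmonic, `u` super-harmonic and `M ∈ ∂g(w)`, then `z = u - w` satisfies
`M z ≤ z`, and the minimum principle for `M` says that the set where `z` attains its minimum is
closed under the arcs of `M`. Inside a recurrence class this makes `z` constant, which forces
`g u = u` on critical nodes, so the decreasing iterates `g^k(u)` never move there. On the whole node
set it means that the minimum of `z` is attained on some recurrence class, so `w ≤ u` as soon as
this holds on critical nodes; this comparison principle gives uniqueness.
-/

section RowStochastic

open Matrix

variable {R ι : Type*}

/-- A set `S` of nodes is closed for the digraph of `M`, which has an arc `(i, j)` whenever
`0 < M i j`: no arc leaves `S`. The minimal nonempty closed sets of a stochastic matrix are its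
recurrence classes. -/
def IsArcClosed [Zero R] [LT R] (M : Matrix ι ι R) (S : Set ι) : Prop :=
  ∀ i ∈ S, ∀ j, 0 < M i j → j ∈ S

namespace IsArcClosed

variable [Zero R] [LT R] {M : Matrix ι ι R} {S : Set ι} {i j : ι}

lemma mem_of_reflTransGen (hS : IsArcClosed M S) (hi : i ∈ S)
    (hij : Relation.ReflTransGen (fun a b => 0 < M a b) i j) : j ∈ S := by
  induction hij with
  | refl => exact hi
  | tail _ harc ih => exact hS _ ih _ harc

lemma setOf_reflTransGen (M : Matrix ι ι R) (i : ι) :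
    IsArcClosed M {j | Relation.ReflTransGen (fun a b => 0 < M a b) i j} :=
  fun _ hj _ harc => hj.tail harc

lemma reflTransGen_of_minimal (hS : Minimal (fun T => T.Nonempty ∧ IsArcClosed M T) S)
    (hi : i ∈ S) (hj : j ∈ S) : Relation.ReflTransGen (fun a b => 0 < M a b) i j :=
  hS.le_of_le ⟨⟨i, .refl⟩, setOf_reflTransGen M i⟩
    (fun _ hk => hS.prop.2.mem_of_reflTransGen hi hk) hj

end IsArcClosed

variable [Fintype ι] [DecidableEq ι] [Ring R] [LinearOrder R] [IsStrictOrderedRing R]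
  {M : Matrix ι ι R} {z : ι → R} {i j : ι}

lemma mulVec_apply_sub_of_mem_rowStochastic (hM : M ∈ rowStochastic R ι) (z : ι → R) (i : ι)
    (c : R) : (M *ᵥ z) i - c = ∑ j, M i j * (z j - c) := by
  simp only [mul_sub, Finset.sum_sub_distrib, ← Finset.sum_mul, sum_row_of_mem_rowStochastic hM,
    one_mul, mulVec, dotProduct]

lemma mulVec_apply_eq_of_forall_arc (hM : M ∈ rowStochastic R ι) {c : R}
    (hz : ∀ j, 0 < M i j → z j = c) : (M *ᵥ z) i = c := by
  rw [← sub_eq_zero, mulVec_apply_sub_of_mem_rowStochastic hM]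
  refine Finset.sum_eq_zero fun j _ => ?_
  rcases (nonneg_of_mem_rowStochastic hM : 0 ≤ M i j).eq_or_lt with hij | hij
  · rw [← hij, zero_mul]
  · rw [hz j hij, sub_self, mul_zero]

lemma eq_of_mulVec_apply_le_of_forall_arc_le (hM : M ∈ rowStochastic R ι)
    (hz : (M *ᵥ z) i ≤ z i) (hmin : ∀ k, 0 < M i k → z i ≤ z k) (hij : 0 < M i j) :
    z j = z i := by
  have hnonneg : ∀ k ∈ Finset.univ, 0 ≤ M i k * (z k - z i) := fun k _ => by
    rcases (nonneg_of_mem_rowStochastic hM : 0 ≤ M i k).eq_or_lt with hik | hik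
    · rw [← hik, zero_mul]
    · exact mul_nonneg hik.le (sub_nonneg.2 (hmin k hik))
  have hsum : ∑ k, M i k * (z k - z i) = 0 := by
    refine le_antisymm ?_ (Finset.sum_nonneg hnonneg)
    rwa [← mulVec_apply_sub_of_mem_rowStochastic hM, sub_nonpos]
  have hterm := (Finset.sum_eq_zero_iff_of_nonneg hnonneg).1 hsum j (Finset.mem_univ j)
  exact sub_eq_zero.1 ((mul_eq_zero_iff_left hij.ne').1 hterm)

lemma IsArcClosed.setOf_isMinOn {S : Set ι} (hS : IsArcClosed M S) (hM : M ∈ rowStochastic R ι)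
    (hz : M *ᵥ z ≤ z) : IsArcClosed M {i ∈ S | IsMinOn z S i} := by
  rintro i ⟨hiS, hmin⟩ j hij
  have hji : z j = z i := eq_of_mulVec_apply_le_of_forall_arc_le hM (hz i)
    (fun k hik => hmin (hS i hiS k hik)) hij
  exact ⟨hS i hiS j hij, fun k hk => hji.trans_le (hmin hk)⟩

end RowStochastic

section RecurrenceClass

open Matrix

variable {n : ℕ} {M : Matrix (Fin n) (Fin n) ℝ} {z : Fin n → ℝ}

lemma IsRecClass.isArcClosed {F : Finset (Fin n)} (hF : IsRecClass M F) :
    IsArcClosed M (F : Set (Fin n)) :=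
  hF.2.2.1

lemma IsRecClass.eq_of_mulVec_le {F : Finset (Fin n)} (hF : IsRecClass M F)
    (hM : M ∈ rowStochastic ℝ (Fin n)) (hz : M *ᵥ z ≤ z) {i j : Fin n} (hi : i ∈ F)
    (hj : j ∈ F) : z i = z j := by
  obtain ⟨m, hm, hmin⟩ := F.exists_min_image z hF.1
  have hminOn : ∀ k ∈ F, IsMinOn z F k := fun k hk =>
    ((hF.isArcClosed.setOf_isMinOn hM hz).mem_of_reflTransGen ⟨hm, hmin⟩ (hF.2.1 m hm k hk)).2
  exact le_antisymm (hminOn i hi hj) (hminOn j hj hi)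

lemma IsArcClosed.exists_isRecClass_subset {S : Set (Fin n)} (hS : IsArcClosed M S)
    (hne : S.Nonempty) (hM : M ∈ rowStochastic ℝ (Fin n)) :
    ∃ F : Finset (Fin n), IsRecClass M F ∧ (F : Set (Fin n)) ⊆ S := by
  obtain ⟨T, hTS, hT⟩ := (Set.toFinite
    {T : Set (Fin n) | T.Nonempty ∧ IsArcClosed M T}).exists_le_minimal ⟨hne, hS⟩
  lift T to Finset (Fin n) using T.toFinite
  have hclosed : IsArcClosed M (T : Set (Fin n)) := hT.prop.2
  refine ⟨T, ⟨hT.prop.1, fun i hi j hj => reflTransGen_of_minimal hT hi hj, hclosed,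
    fun i hi => ?_⟩, hTS⟩
  rw [← sum_row_of_mem_rowStochastic hM i]
  refine Finset.sum_subset (Finset.subset_univ T) fun j _ hj => ?_
  exact le_antisymm (not_lt.1 fun hij => hj (hclosed i hi j hij)) (nonneg_of_mem_rowStochastic hM)

lemma nonneg_of_mulVec_le_of_nonneg_isRecClass (hM : M ∈ rowStochastic ℝ (Fin n))
    (hz : M *ᵥ z ≤ z) (hrec : ∀ F, IsRecClass M F → ∀ i ∈ F, 0 ≤ z i) : 0 ≤ z := by
  intro k
  have : Nonempty (Fin n) := ⟨k⟩
  obtain ⟨m, hm⟩ := Finite.exists_min z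
  have huniv : IsArcClosed M Set.univ := fun _ _ _ _ => Set.mem_univ _
  obtain ⟨F, hF, hFmin⟩ := (huniv.setOf_isMinOn hM hz).exists_isRecClass_subset
    ⟨m, Set.mem_univ m, fun j _ => hm j⟩ hM
  obtain ⟨i, hi⟩ := hF.1
  exact (hrec F hF i hi).trans ((hFmin hi).2 (Set.mem_univ k))

end RecurrenceClass

section Subdifferential

open Matrix

lemma exists_subgradient_of_convexOn {E : Type*} [AddCommGroup E] [Module ℝ E]
    [TopologicalSpace E] [IsTopologicalAddGroup E] [ContinuousSMul ℝ E] {s : Set E} {f : E → ℝ}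
    (hs : IsOpen s) (hf : ConvexOn ℝ s f) (hcont : ContinuousOn f s) {x : E} (hx : x ∈ s) :
    ∃ l : E →L[ℝ] ℝ, ∀ y ∈ s, f x + l (y - x) ≤ f y := by
  have hopen : IsOpen {p : E × ℝ | p.1 ∈ s ∧ f p.1 < p.2} := by
    have hdiff : ContinuousOn (fun p : E × ℝ => p.2 - f p.1) (Prod.fst ⁻¹' s) :=
      continuousOn_snd.sub (hcont.comp continuousOn_fst fun _ hp => hp)
    simpa only [Set.inter_def, Set.mem_preimage, Set.mem_Ioi, sub_pos] using
      hdiff.isOpen_inter_preimage (hs.preimage continuous_fst) (isOpen_Ioi (a := (0 : ℝ)))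
  obtain ⟨L, hL⟩ := geometric_hahn_banach_open_point hf.convex_strict_epigraph hopen
    (x := (x, f x)) fun h => lt_irrefl _ h.2
  have hsplit (y : E) (t : ℝ) : L (y, t) = L (y, 0) + t * L (0, 1) := by
    rw [← smul_eq_mul, ← map_smul, ← map_add]
    simp
  have hvert : L (0, 1) < 0 := by
    have h := hL (x, f x + 1) ⟨hx, lt_add_one _⟩
    rw [hsplit, hsplit x (f x)] at h
    linarith
  refine ⟨(-L (0, 1))⁻¹ • L.comp (.inl ℝ E ℝ), fun y hy => le_of_forall_gt fun t ht => ?_⟩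
  have h := hL (y, t) ⟨hy, ht⟩
  rw [hsplit, hsplit x (f x)] at h
  have hslope : (-L (0, 1))⁻¹ * (L (y, 0) - L (x, 0)) < t - f x := by
    rw [inv_mul_lt_iff₀ (neg_pos.2 hvert)]
    linarith
  have hlin : L (y - x, 0) = L (y, 0) - L (x, 0) := by
    rw [← map_sub, Prod.mk_sub_mk, sub_zero]
  simp only [_root_.smul_apply, ContinuousLinearMap.comp_apply,
    ContinuousLinearMap.inl_apply, smul_eq_mul, hlin]
  linarith

/-- Additive homogeneity of a self-map of `ℝ^ι`: it commutes with the addition of constants. -/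
def IsAdditivelyHomogeneous {ι : Type*} (g : (ι → ℝ) → (ι → ℝ)) : Prop :=
  ∀ (c : ℝ) (x : ι → ℝ), g (fun i => c + x i) = fun i => c + g x i

variable {n : ℕ} {g : (Fin n → ℝ) → (Fin n → ℝ)} {u w : Fin n → ℝ}
  {M : Matrix (Fin n) (Fin n) ℝ}

lemma subdiff_nonempty (hconv : ∀ i, ConvexOn ℝ Set.univ (fun x => g x i)) (u : Fin n → ℝ) :
    (Subdiff g u).Nonempty := by
  choose l hl using fun i => exists_subgradient_of_convexOn isOpen_univ (hconv i)
    (hconv i).locallyLipschitz.continuous.continuousOn (Set.mem_univ u)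
  refine ⟨LinearMap.toMatrix' (LinearMap.pi fun i => (l i : (Fin n → ℝ) →ₗ[ℝ] ℝ)), fun x i => ?_⟩
  rw [LinearMap.toMatrix'_mulVec]
  exact hl i x (Set.mem_univ x)

lemma nonneg_of_mem_subdiff (hg : Monotone g) (hM : M ∈ Subdiff g u) (i j : Fin n) :
    0 ≤ M i j := by
  have hle : u - Pi.single j 1 ≤ u := sub_le_self u (Pi.single_nonneg.2 zero_le_one)
  have hsub := (hM (u - Pi.single j 1) i).trans (hg hle i)
  simpa [sub_sub_cancel_left, mulVec_neg] using hsub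

lemma sum_row_of_mem_subdiff (hg : IsAdditivelyHomogeneous g) (hM : M ∈ Subdiff g u)
    (i : Fin n) : ∑ j, M i j = 1 := by
  have hshift (c : ℝ) : (∑ j, M i j) * c ≤ c := by
    have hsub := hM (fun j => c + u j) i
    have hconst : (fun j => c + u j) - u = fun _ => c := by
      ext j
      simp
    rw [hg, hconst] at hsub
    simp only [mulVec, dotProduct, ← Finset.sum_mul] at hsub
    linarith
  linarith [hshift 1, hshift (-1)]

lemma mem_rowStochastic_of_mem_subdiff (hmono : Monotone g) (hhom : IsAdditivelyHomogeneous g)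
    (hM : M ∈ Subdiff g u) : M ∈ rowStochastic ℝ (Fin n) :=
  mem_rowStochastic_iff_sum.2 ⟨nonneg_of_mem_subdiff hmono hM, sum_row_of_mem_subdiff hhom hM⟩

lemma mulVec_sub_le_of_mem_subdiff (hM : M ∈ Subdiff g w) (hw : w ≤ g w) (hu : g u ≤ u) :
    M *ᵥ (u - w) ≤ u - w := fun i => by
  have hsub := hM u i
  have hwi := hw i
  have hui := hu i
  rw [Pi.sub_apply]
  linarith

lemma IsCritical.map_apply_eq_of_map_le (hmono : Monotone g) (hhom : IsAdditivelyHomogeneous g)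
    {i : Fin n} (hi : IsCritical g i) (hu : g u ≤ u) : g u i = u i := by
  obtain ⟨w, hw, M, hM, F, hF, hiF⟩ := hi
  have hstoch := mem_rowStochastic_of_mem_subdiff hmono hhom hM
  have hsuper := mulVec_sub_le_of_mem_subdiff hM hw.ge hu
  have hharm : (M *ᵥ (u - w)) i = (u - w) i := mulVec_apply_eq_of_forall_arc hstoch
    fun j hij => hF.eq_of_mulVec_le hstoch hsuper (hF.isArcClosed i hiF j hij) hiF
  refine le_antisymm (hu i) ?_
  calc u i = g w i + (M *ᵥ (u - w)) i := by rw [hharm, hw, Pi.sub_apply, add_sub_cancel]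
    _ ≤ g u i := hM u i

lemma IsCritical.iterate_apply_eq_of_map_le (hmono : Monotone g)
    (hhom : IsAdditivelyHomogeneous g) {i : Fin n} (hi : IsCritical g i) (hu : g u ≤ u) (k : ℕ) :
    g^[k] u i = u i := by
  induction k with
  | zero => rfl
  | succ k ih =>
    have hsuper : g (g^[k] u) ≤ g^[k] u := by
      simpa only [Function.iterate_succ_apply'] using
        hmono.antitone_iterate_of_map_le hu k.le_succ
    rw [Function.iterate_succ_apply', hi.map_apply_eq_of_map_le hmono hhom hsuper, ih]

lemma le_of_forall_isCritical_le (hconv : ∀ i, ConvexOn ℝ Set.univ (fun x => g x i))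
    (hmono : Monotone g) (hhom : IsAdditivelyHomogeneous g) (hw : g w = w) (hu : g u ≤ u)
    (hcrit : ∀ i, IsCritical g i → w i ≤ u i) : w ≤ u := by
  obtain ⟨M, hM⟩ := subdiff_nonempty hconv w
  refine sub_nonneg.1 (nonneg_of_mulVec_le_of_nonneg_isRecClass
    (mem_rowStochastic_of_mem_subdiff hmono hhom hM) (mulVec_sub_le_of_mem_subdiff hM hw.ge hu)
    fun F hF i hi => ?_)
  exact sub_nonneg.2 (hcrit i ⟨w, hw, M, hM, F, hF, hi⟩)

end Subdifferential

section Iterates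

lemma exists_tendsto_iterate_of_map_le {α : Type*} [ConditionallyCompleteLattice α]
    [TopologicalSpace α] [InfConvergenceClass α] [T2Space α] {f : α → α} {u : α}
    (hmono : Monotone f) (hcont : Continuous f) (hu : f u ≤ u)
    (hbdd : BddBelow (Set.range fun k : ℕ => f^[k] u)) :
    ∃ v, Tendsto (fun k : ℕ => f^[k] u) atTop (𝓝 v) ∧ f v = v := by
  have hlim := tendsto_atTop_ciInf (hmono.antitone_iterate_of_map_le hu) hbdd
  exact ⟨_, hlim, isFixedPt_of_tendsto_iterate hlim hcont.continuousAt⟩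

lemma IsAdditivelyHomogeneous.bddBelow_range_iterate {ι : Type*} [Finite ι]
    {g : (ι → ℝ) → (ι → ℝ)} (hhom : IsAdditivelyHomogeneous g) (hmono : Monotone g) {w : ι → ℝ}
    (hw : w ≤ g w) (u : ι → ℝ) : BddBelow (Set.range fun k : ℕ => g^[k] u) := by
  obtain ⟨c, hc⟩ := (Set.finite_range (u - w)).bddBelow
  set y : ι → ℝ := fun i => c + w i with hy
  have hyu : y ≤ u := fun i => by
    have hci : c ≤ u i - w i := hc (Set.mem_range_self i)
    linarith
  have hyg : y ≤ g y := fun i => by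
    rw [hy, hhom]
    exact add_le_add_right (hw i) c
  refine ⟨y, ?_⟩
  rintro _ ⟨k, rfl⟩
  exact (hmono.monotone_iterate_of_le_map hyg k.zero_le).trans (hmono.iterate k hyu)

end Iterates

/-- Let `g : ℝⁿ → ℝⁿ` be convex, order-preserving and additively
homogeneous with at least one harmonic vector, and let `C` be its set of critical nodes.
For every super-harmonic vector `u` there exists a unique harmonic vector `v` coinciding
with `u` on `C`, and this `v` equals `lim_{k→∞} g^k(u)`. -/
theorem unique_harmonic_extension
    (n : ℕ) (g : (Fin n → ℝ) → (Fin n → ℝ))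
    (hconv : ∀ i, ConvexOn ℝ Set.univ (fun x => g x i))
    (hop : ∀ x y : Fin n → ℝ, x ≤ y → g x ≤ g y)
    (hah : ∀ (lam : ℝ) (x : Fin n → ℝ), g (fun i => lam + x i) = fun i => lam + g x i)
    (u₀ : Fin n → ℝ) (hu₀ : g u₀ = u₀)
    (u : Fin n → ℝ) (hu : g u ≤ u) :
    ∃ v : Fin n → ℝ,
      Tendsto (fun k : ℕ => g^[k] u) atTop (𝓝 v) ∧
      g v = v ∧ (∀ i : Fin n, IsCritical g i → v i = u i) ∧
      ∀ v' : Fin n → ℝ, g v' = v' → (∀ i : Fin n, IsCritical g i → v' i = u i) →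
        v' = v := by
  have hmono : Monotone g := fun x y => hop x y
  have hcont : Continuous g := continuous_pi fun i => (hconv i).locallyLipschitz.continuous
  have hbdd : BddBelow (Set.range fun k : ℕ => g^[k] u) :=
    IsAdditivelyHomogeneous.bddBelow_range_iterate hah hmono hu₀.ge u
  obtain ⟨v, hlim, hv⟩ := exists_tendsto_iterate_of_map_le hmono hcont hu hbdd
  have hvC : ∀ i, IsCritical g i → v i = u i := fun i hi => by
    refine tendsto_nhds_unique (tendsto_pi_nhds.1 hlim i) ?_
    simp only [hi.iterate_apply_eq_of_map_le hmono hah hu, tendsto_const_nhds]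
  refine ⟨v, hlim, hv, hvC, fun v' hv' hv'C => le_antisymm ?_ ?_⟩
  · exact le_of_forall_isCritical_le hconv hmono hah hv' hv.le
      fun i hi => by rw [hv'C i hi, hvC i hi]
  · exact le_of_forall_isCritical_le hconv hmono hah hv hv'.le
      fun i hi => by rw [hv'C i hi, hvC i hi]
end

section
/- Let g : ℝⁿ → ℝⁿ be convex, order-preserving and additively homogeneous with at least one harmonic vector, let C be its set of critical nodes and N = {1,…,n} ∖ C, and let u be super-harmonic with respect to g. For a vector v ∈ ℝⁿ satisfying v_i = u_i for all i ∈ C, the following are equivalent: (a) v is harmonic with respect to g; (b) the restriction v_N is a fixed point of the map h : ℝ^N → ℝ^N defined by h(y) = r_N(g(ι_N(y, u_C))). -/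
open Filter Topology

open Classical in
/-- `ι_N(y, u_C)`: the vector of `ℝⁿ` equal to `y` on the complement `N` of the set of
critical nodes of `g`, and to `u` on the critical nodes. -/
noncomputable def combineCrit {n : ℕ} (g : (Fin n → ℝ) → (Fin n → ℝ)) (u : Fin n → ℝ)
    (y : {i : Fin n // ¬ IsCritical g i} → ℝ) : Fin n → ℝ :=
  fun j => if hj : IsCritical g j then u j else y ⟨j, hj⟩

/-!
Monotonicity and (sub)homogeneity make the matrices of the subdifferential nonnegative with row sums
at most `1`, and if `a ≤ g a` and `g b ≤ b`, then `a - b ≤ M (a - b)` for every `M ∈ ∂g(a)`. By the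
maximum principle such a difference is constant on each recurrence class of `M`, and if it is
positive somewhere then it is positive on a whole recurrence class. The subgradient inequality then
gives `v ≤ g v` on the critical nodes as soon as `v` agrees there with a super-harmonic `u`.
Conversely, a recurrence class of `M ∈ ∂g(v)` with `v ≤ g v` is also a recurrence class of some
subgradient matrix at any harmonic vector, hence consists of critical nodes. So `v ≤ u` propagates
from the critical nodes to all nodes, and `g v ≤ g u ≤ u = v` on the critical nodes.
-/

/-- An additively subhomogeneous map: adding a nonnegative constant to all the coordinates of the
argument increases each coordinate of the value by at most that constant. This weakening of additive
homogeneity bounds the row sums of subgradient matrices by `1`. -/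
def IsAddSubhomogeneous {ι : Type*} (g : (ι → ℝ) → ι → ℝ) : Prop :=
  ∀ t : ℝ, 0 ≤ t → ∀ x, g (fun i => t + x i) ≤ fun i => t + g x i

section Reachability

variable {α : Type*} {r s : α → α → Prop} {A : Set α}

lemma mem_of_reflTransGen (hA : ∀ a ∈ A, ∀ b, r a b → b ∈ A) {a b : α} (ha : a ∈ A)
    (hab : Relation.ReflTransGen r a b) : b ∈ A := by
  induction hab with
  | refl => exact ha
  | tail _ hbc ih => exact hA _ ih _ hbc

lemma reflTransGen_mono_on (hA : ∀ a ∈ A, ∀ b, r a b → b ∈ A)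
    (hrs : ∀ a ∈ A, ∀ b, r a b → s a b) {a b : α} (ha : a ∈ A)
    (hab : Relation.ReflTransGen r a b) : Relation.ReflTransGen s a b := by
  induction hab with
  | refl => exact .refl
  | tail hab hbc ih => exact ih.tail (hrs _ (mem_of_reflTransGen hA ha hab) _ hbc)

-- Choose `a` with a minimal set of reachable nodes.
lemma exists_mem_forall_reflTransGen_symm (hfin : A.Finite) (hne : A.Nonempty)
    (hA : ∀ a ∈ A, ∀ b, r a b → b ∈ A) :
    ∃ a ∈ A, ∀ b, Relation.ReflTransGen r a b → Relation.ReflTransGen r b a := by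
  obtain ⟨a, ha, hmin⟩ := hfin.exists_minimalFor (fun a => {b | Relation.ReflTransGen r a b}) A hne
  exact ⟨a, ha, fun b hab =>
    hmin (mem_of_reflTransGen hA ha hab) (fun _ hbc => hab.trans hbc) .refl⟩

end Reachability

lemma eq_of_le_sum_mul {ι R : Type*} [CommRing R] [LinearOrder R] [IsStrictOrderedRing R]
    {s : Finset ι} {p y : ι → R} {m : R} (hp : ∀ j ∈ s, 0 ≤ p j) (hpm : (∑ j ∈ s, p j) * m ≤ m)
    (hy : ∀ j ∈ s, y j ≤ m) (hm : m ≤ ∑ j ∈ s, p j * y j) {j : ι} (hj : j ∈ s) (hpj : 0 < p j) :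
    y j = m := by
  have hle : ∀ j ∈ s, p j * y j ≤ p j * m := fun j hj =>
    mul_le_mul_of_nonneg_left (hy j hj) (hp j hj)
  have hsum : ∑ j ∈ s, p j * y j = ∑ j ∈ s, p j * m :=
    (Finset.sum_le_sum hle).antisymm (by rw [← Finset.sum_mul]; exact hpm.trans hm)
  exact mul_left_cancel₀ hpj.ne' ((Finset.sum_eq_sum_iff_of_le hle).1 hsum j hj)

lemma exists_subgradient {E : Type*} [AddCommGroup E] [Module ℝ E] [TopologicalSpace E]
    [IsTopologicalAddGroup E] [ContinuousSMul ℝ E] {f : E → ℝ} (hf : ConvexOn ℝ Set.univ f)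
    (hcont : Continuous f) (u : E) : ∃ φ : E →L[ℝ] ℝ, ∀ x, f u + φ (x - u) ≤ f x := by
  have hopen : IsOpen {p : E × ℝ | p.1 ∈ Set.univ ∧ f p.1 < p.2} := by
    simp only [Set.mem_univ, true_and]
    exact isOpen_lt (by fun_prop) continuous_snd
  obtain ⟨L, hL⟩ := geometric_hahn_banach_point_open (x := (u, f u))
    hf.convex_strict_epigraph hopen (fun h => lt_irrefl _ h.2)
  have hL_apply (x : E) (t : ℝ) : L (x, t) = L (x, 0) + t * L (0, 1) := by
    rw [← smul_eq_mul, ← map_smul, ← map_add]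
    simp
  have hpos : 0 < L (0, 1) := by
    have := hL (u, f u + 1) ⟨trivial, lt_add_one _⟩
    rw [hL_apply u (f u), hL_apply u (f u + 1)] at this
    linarith
  have hsupport (x : E) : L (u, 0) + f u * L (0, 1) ≤ L (x, 0) + f x * L (0, 1) := by
    refine le_of_forall_pos_le_add fun ε hε => ?_
    have := hL (x, f x + ε / L (0, 1)) ⟨trivial, lt_add_of_pos_right _ (div_pos hε hpos)⟩
    rw [hL_apply u, hL_apply x, add_mul, div_mul_cancel₀ _ hpos.ne'] at this
    linarith
  refine ⟨-(L (0, 1))⁻¹ • L.comp (ContinuousLinearMap.inl ℝ E ℝ), fun x => ?_⟩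
  have hφ : L (0, 1) * (-(L (0, 1))⁻¹ * (L (x, 0) - L (u, 0))) = L (u, 0) - L (x, 0) := by
    field_simp
    ring
  refine le_of_mul_le_mul_left ?_ hpos
  simp only [map_sub, smul_apply, ContinuousLinearMap.comp_apply,
    ContinuousLinearMap.inl_apply, smul_eq_mul, ← mul_sub, mul_add, hφ]
  linarith [hsupport x]

section SuperHarmonic

open Matrix

variable {n : ℕ} {g : (Fin n → ℝ) → (Fin n → ℝ)} {M P : Matrix (Fin n) (Fin n) ℝ}
  {F : Finset (Fin n)} {u u₀ v y : Fin n → ℝ}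

namespace IsRecClass

lemma congr (hF : IsRecClass P F) (hMP : ∀ i ∈ F, M i = P i) : IsRecClass M F := by
  obtain ⟨hne, hconn, hclosed, hsum⟩ := hF
  refine ⟨hne, fun i hi j hj => ?_, fun i hi => hMP i hi ▸ hclosed i hi,
    fun i hi => hMP i hi ▸ hsum i hi⟩
  exact reflTransGen_mono_on (A := F) hclosed (fun a ha b hab => by rwa [hMP a ha]) hi
    (hconn i hi j hj)

lemma mulVec_apply_eq_sum (hF : IsRecClass M F) (hM : ∀ i j, 0 ≤ M i j) (y : Fin n → ℝ) {i : Fin n}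
    (hi : i ∈ F) : (M *ᵥ y) i = ∑ j ∈ F, M i j * y j := by
  refine (Finset.sum_subset (Finset.subset_univ F) fun j _ hj => ?_).symm
  have hMij : M i j = 0 := ((hM i j).eq_of_not_lt fun h => hj (hF.2.2.1 i hi j h)).symm
  exact mul_eq_zero_of_left hMij (y j)

lemma mulVec_apply_eq_self (hF : IsRecClass M F) (hM : ∀ i j, 0 ≤ M i j) {i : Fin n}
    (hi : i ∈ F) (hy : ∀ j ∈ F, y j = y i) : (M *ᵥ y) i = y i := by
  rw [hF.mulVec_apply_eq_sum hM y hi, Finset.sum_congr rfl fun j hj => by rw [hy j hj],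
    ← Finset.sum_mul, hF.2.2.2 i hi, one_mul]

lemma apply_eq_apply_of_le_mulVec (hF : IsRecClass M F) (hM : ∀ i j, 0 ≤ M i j)
    (hy : ∀ i ∈ F, y i ≤ (M *ᵥ y) i) {i j : Fin n} (hi : i ∈ F) (hj : j ∈ F) : y i = y j := by
  obtain ⟨k, hk, hmax⟩ := F.exists_max_image y hF.1
  have hclosed : ∀ a ∈ {a | a ∈ F ∧ y a = y k}, ∀ b, 0 < M a b → b ∈ {a | a ∈ F ∧ y a = y k} := by
    rintro a ⟨ha, hya⟩ b hab
    have hb := hF.2.2.1 a ha b hab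
    refine ⟨hb, eq_of_le_sum_mul (fun j _ => hM a j) ?_ hmax ?_ hb hab⟩
    · rw [hF.2.2.2 a ha, one_mul]
    · rw [← hF.mulVec_apply_eq_sum hM y ha, ← hya]
      exact hy a ha
  have heq {a : Fin n} (ha : a ∈ F) : y a = y k :=
    (mem_of_reflTransGen hclosed ⟨hk, rfl⟩ (hF.2.1 k hk a ha)).2
  rw [heq hi, heq hj]

end IsRecClass

lemma exists_isRecClass_subset {A : Finset (Fin n)} (hM : ∀ i j, 0 ≤ M i j)
    (hsum : ∀ i ∈ A, ∑ j, M i j = 1) (hne : A.Nonempty)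
    (hA : ∀ i ∈ A, ∀ j, 0 < M i j → j ∈ A) : ∃ F ⊆ A, IsRecClass M F := by
  classical
  obtain ⟨i, hi, hsymm⟩ := exists_mem_forall_reflTransGen_symm A.finite_toSet hne hA
  let F : Finset (Fin n) := {j | Relation.ReflTransGen (fun a b => 0 < M a b) i j}
  have mem_F {j : Fin n} : j ∈ F ↔ Relation.ReflTransGen (fun a b => 0 < M a b) i j := by
    simp only [F, Finset.mem_filter_univ]
  have hFA : F ⊆ A := fun j hj => mem_of_reflTransGen (A := A) hA hi (mem_F.1 hj)
  have hclosed : ∀ a ∈ F, ∀ b, 0 < M a b → b ∈ F := fun a ha b hab =>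
    mem_F.2 ((mem_F.1 ha).tail hab)
  refine ⟨F, hFA, ⟨i, mem_F.2 .refl⟩,
    fun a ha b hb => (hsymm a (mem_F.1 ha)).trans (mem_F.1 hb), hclosed, fun a ha => ?_⟩
  rw [← hsum a (hFA ha)]
  exact Finset.sum_subset (Finset.subset_univ F) fun b _ hb =>
    ((hM a b).eq_of_not_lt fun h => hb (hclosed a ha b h)).symm

-- The nodes where `y` is maximal form a closed set, whose rows sum to `1` because `max y > 0`.
lemma exists_isRecClass_pos_of_le_mulVec (hM : ∀ i j, 0 ≤ M i j) (hsum : ∀ i, ∑ j, M i j ≤ 1)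
    (hy : y ≤ M *ᵥ y) {i : Fin n} (hi : 0 < y i) : ∃ F, IsRecClass M F ∧ ∀ j ∈ F, 0 < y j := by
  obtain ⟨k, -, hmax⟩ := Finset.univ.exists_max_image y ⟨i, Finset.mem_univ i⟩
  have hpos : 0 < y k := hi.trans_le (hmax i (Finset.mem_univ i))
  let A : Finset (Fin n) := {a | y a = y k}
  have mem_A {a : Fin n} : a ∈ A ↔ y a = y k := by simp only [A, Finset.mem_filter_univ]
  have hle {a : Fin n} (ha : a ∈ A) : y k ≤ ∑ j, M a j * y j := mem_A.1 ha ▸ hy a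
  have hsumA : ∀ a ∈ A, ∑ j, M a j = 1 := fun a ha => by
    refine (hsum a).antisymm (le_of_mul_le_mul_right ?_ hpos)
    calc 1 * y k ≤ ∑ j, M a j * y j := by rw [one_mul]; exact hle ha
      _ ≤ ∑ j, M a j * y k := Finset.sum_le_sum fun j hj =>
          mul_le_mul_of_nonneg_left (hmax j hj) (hM a j)
      _ = (∑ j, M a j) * y k := (Finset.sum_mul ..).symm
  obtain ⟨F, hFA, hF⟩ := exists_isRecClass_subset hM hsumA ⟨k, mem_A.2 rfl⟩ fun a ha b hab =>
    mem_A.2 <| eq_of_le_sum_mul (fun j _ => hM a j) (by rw [hsumA a ha, one_mul]) hmax (hle ha)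
      (Finset.mem_univ b) hab
  exact ⟨F, hF, fun j hj => (mem_A.1 (hFA hj)).symm ▸ hpos⟩

namespace Subdiff

lemma nonempty (hconv : ∀ i, ConvexOn ℝ Set.univ fun x => g x i) (u : Fin n → ℝ) :
    (Subdiff g u).Nonempty := by
  choose φ hφ using fun i =>
    exists_subgradient (hconv i) (hconv i).locallyLipschitz.continuous u
  refine ⟨LinearMap.toMatrix' (LinearMap.pi fun i => (φ i : (Fin n → ℝ) →ₗ[ℝ] ℝ)), fun x i => ?_⟩
  rw [LinearMap.toMatrix'_mulVec]
  exact hφ i x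

lemma apply_nonneg (hmono : Monotone g) (hM : M ∈ Subdiff g u) (i j : Fin n) : 0 ≤ M i j := by
  have hsub := hM (u - Pi.single j 1) i
  have hle : g (u - Pi.single j 1) i ≤ g u i :=
    hmono (sub_le_self u (Pi.single_nonneg.2 zero_le_one)) i
  rw [sub_sub_cancel_left, mulVec_neg, mulVec_single_one, Pi.neg_apply, col_apply] at hsub
  linarith

lemma row_sum_le_one (hsubhom : IsAddSubhomogeneous g) (hM : M ∈ Subdiff g u) (i : Fin n) :
    ∑ j, M i j ≤ 1 := by
  have hsub := hM (fun j => 1 + u j) i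
  have hle : g (fun j => 1 + u j) i ≤ 1 + g u i := hsubhom 1 zero_le_one u i
  simp only [mulVec, dotProduct, Pi.sub_apply, add_sub_cancel_right, mul_one] at hsub
  linarith

lemma piecewise_mem (hM : ∀ i ∈ F, ∀ x, g u i + (M *ᵥ (x - u)) i ≤ g x i)
    (hP : P ∈ Subdiff g u) : (F.piecewise M P : Matrix (Fin n) (Fin n) ℝ) ∈ Subdiff g u := by
  intro x i
  by_cases hi : i ∈ F
  · simpa only [mulVec, Finset.piecewise_eq_of_mem F M P hi] using hM i hi x
  · simpa only [mulVec, Finset.piecewise_eq_of_notMem F M P hi] using hP x i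

lemma sub_le_mulVec_sub (hM : M ∈ Subdiff g v) (hv : v ≤ g v) (hu : g u ≤ u) :
    v - u ≤ M *ᵥ (v - u) := by
  intro i
  have hsub := hM u i
  rw [← neg_sub v u, mulVec_neg, Pi.neg_apply] at hsub
  have hvi := hv i
  have hui := hu i
  rw [Pi.sub_apply]
  linarith

end Subdiff

-- On `F` the vectors `v` and `u₀` differ by a constant, so the rows of `P` indexed by `F` are
-- subgradients at `u₀` too.
lemma IsRecClass.isCritical (hF : IsRecClass P F) (hconv : ∀ i, ConvexOn ℝ Set.univ fun x => g x i)
    (hmono : Monotone g) (hu₀ : g u₀ = u₀) (hv : v ≤ g v) (hP : P ∈ Subdiff g v) {i : Fin n}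
    (hi : i ∈ F) : IsCritical g i := by
  have hP0 := Subdiff.apply_nonneg hmono hP
  have hdiff : ∀ i ∈ F, (P *ᵥ (v - u₀)) i = v i - u₀ i := fun i hi =>
    hF.mulVec_apply_eq_self hP0 hi fun _ hj =>
      hF.apply_eq_apply_of_le_mulVec hP0 (fun i _ => Subdiff.sub_le_mulVec_sub hP hv hu₀.le i) hj hi
  have hrows : ∀ i ∈ F, ∀ x, g u₀ i + (P *ᵥ (x - u₀)) i ≤ g x i := fun i hi x =>
    calc g u₀ i + (P *ᵥ (x - u₀)) i = v i + (P *ᵥ (x - v)) i := by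
          rw [hu₀, ← sub_add_sub_cancel x v u₀, mulVec_add, Pi.add_apply, hdiff i hi]
          ring
      _ ≤ g v i + (P *ᵥ (x - v)) i := by gcongr; exact hv i
      _ ≤ g x i := hP x i
  obtain ⟨Q, hQ⟩ := Subdiff.nonempty hconv u₀
  exact ⟨u₀, hu₀, F.piecewise P Q, Subdiff.piecewise_mem hrows hQ, F,
    hF.congr fun _ => F.piecewise_eq_of_mem P Q, hi⟩

theorem le_of_le_on_isCritical (hconv : ∀ i, ConvexOn ℝ Set.univ fun x => g x i)
    (hmono : Monotone g) (hsubhom : IsAddSubhomogeneous g) (hu₀ : g u₀ = u₀) (hu : g u ≤ u)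
    (hv : v ≤ g v) (hvu : ∀ i, IsCritical g i → v i ≤ u i) : v ≤ u := by
  intro i
  by_contra! hi
  obtain ⟨P, hP⟩ := Subdiff.nonempty hconv v
  obtain ⟨F, hF, hpos⟩ := exists_isRecClass_pos_of_le_mulVec (Subdiff.apply_nonneg hmono hP)
    (Subdiff.row_sum_le_one hsubhom hP) (Subdiff.sub_le_mulVec_sub hP hv hu) (sub_pos.2 hi)
  obtain ⟨j, hj⟩ := hF.1
  exact (hvu j (hF.isCritical hconv hmono hu₀ hv hP hj)).not_gt (sub_pos.1 (hpos j hj))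

lemma IsCritical.le_apply (hmono : Monotone g) (hu : g u ≤ u)
    (hvu : ∀ i, IsCritical g i → v i = u i) {i : Fin n} (hi : IsCritical g i) : v i ≤ g v i := by
  obtain ⟨w, hw, M, hM, F, hF, hiF⟩ := hi
  have hM0 := Subdiff.apply_nonneg hmono hM
  have hconst : ∀ j ∈ F, (v - w) j = (v - w) i := fun j hj => by
    have hwu := hF.apply_eq_apply_of_le_mulVec hM0
      (fun i _ => Subdiff.sub_le_mulVec_sub hM hw.ge hu i) hj hiF
    have hvF : ∀ k ∈ F, v k = u k := fun k hk => hvu k ⟨w, hw, M, hM, F, hF, hk⟩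
    simp only [Pi.sub_apply] at hwu ⊢
    rw [hvF j hj, hvF i hiF]
    linarith
  calc v i = g w i + (M *ᵥ (v - w)) i := by
        rw [hF.mulVec_apply_eq_self hM0 hiF hconst, hw, Pi.sub_apply, add_sub_cancel]
    _ ≤ g v i := hM v i

lemma combineCrit_restrict (hvu : ∀ i, IsCritical g i → v i = u i) :
    combineCrit g u (fun j => v j.1) = v := by
  funext j
  unfold combineCrit
  split_ifs with hj
  · exact (hvu j hj).symm
  · rfl

theorem harmonic_iff_restriction_fixedPoint_general
    (hconv : ∀ i, ConvexOn ℝ Set.univ fun x => g x i) (hmono : Monotone g)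
    (hsubhom : IsAddSubhomogeneous g) (hu : g u ≤ u) (hvu : ∀ i, IsCritical g i → v i = u i) :
    g v = v ↔
      (fun i : {i : Fin n // ¬ IsCritical g i} =>
          g (combineCrit g u (fun j => v j.1)) i.1) = fun i => v i.1 := by
  rw [combineCrit_restrict hvu]
  refine ⟨fun h => funext fun i => congrFun h i, fun h => ?_⟩
  have hnoncrit : ∀ i, ¬ IsCritical g i → g v i = v i := fun i hi => congrFun h ⟨i, hi⟩
  have hv : v ≤ g v := fun i =>
    (em (IsCritical g i)).elim (IsCritical.le_apply hmono hu hvu) fun hi => (hnoncrit i hi).ge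
  funext i
  by_cases hi : IsCritical g i
  · obtain ⟨w, hw, -⟩ := id hi
    have hle : v ≤ u :=
      le_of_le_on_isCritical hconv hmono hsubhom hw hu hv fun j hj => (hvu j hj).le
    have hge : g v i ≤ v i := ((hmono hle i).trans (hu i)).trans_eq (hvu i hi).symm
    exact hge.antisymm (hv i)
  · exact hnoncrit i hi

end SuperHarmonic

/-- Let `g : ℝⁿ → ℝⁿ` be convex, order-preserving and additively
homogeneous with at least one harmonic vector, let `C` be its set of critical nodes and
`N` its complement, and let `u` be super-harmonic.  For a vector `v` coinciding with `u`
on `C`, `v` is harmonic with respect to `g` if and only if the restriction `v_N` is a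
fixed point of `h : ℝ^N → ℝ^N`, `h(y) = r_N (g (ι_N(y, u_C)))`. -/
theorem harmonic_iff_restriction_fixedPoint
    (n : ℕ) (g : (Fin n → ℝ) → (Fin n → ℝ))
    (hconv : ∀ i, ConvexOn ℝ Set.univ (fun x => g x i))
    (hop : ∀ x y : Fin n → ℝ, x ≤ y → g x ≤ g y)
    (hah : ∀ (lam : ℝ) (x : Fin n → ℝ), g (fun i => lam + x i) = fun i => lam + g x i)
    (u₀ : Fin n → ℝ) (hu₀ : g u₀ = u₀)
    (u : Fin n → ℝ) (hu : g u ≤ u)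
    (v : Fin n → ℝ) (hvC : ∀ i : Fin n, IsCritical g i → v i = u i) :
    g v = v ↔
      (fun i : {i : Fin n // ¬ IsCritical g i} =>
          g (combineCrit g u (fun j => v j.1)) i.1) = fun i => v i.1 := by
  exact harmonic_iff_restriction_fixedPoint_general hconv (fun x y => hop x y)
    (fun t _ x => (hah t x).le) hu hvC
end

section
/- Let g : ℝⁿ → ℝⁿ be polyhedral, convex, order-preserving and additively homogeneous, let η = χ(g) be its cycle time (which exists), and let w : t ↦ tη + v be a super-invariant half-line of g. Define ḡ : ℝⁿ → ℝⁿ by ḡ(y) = lim_{t→∞} (g(tη + y) − (t+1)η) (this limit exists), and let C be the set of critical nodes of ḡ. Then there exists a unique invariant half-line of g that coincides with w on C for all large t, namely t ↦ tη + z where z = lim_{k→∞} ḡ^k(v); that is, z is the unique vector such that t ↦ tη + z is invariant under g and z_i = v_i for all i ∈ C. -/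
open Filter Topology

/-- `g : ℝⁿ → ℝⁿ` is polyhedral: there is a covering of `ℝⁿ` by finitely many convex
polyhedra (finite intersections of half-spaces) on each of which `g` is affine. -/
def IsPolyhedralMap {n : ℕ} (g : (Fin n → ℝ) → (Fin n → ℝ)) : Prop :=
  ∃ (m : ℕ) (C : Fin m → Set (Fin n → ℝ)),
    (⋃ k, C k) = Set.univ ∧
    ∀ k : Fin m,
      (∃ (p : ℕ) (a : Fin p → Fin n → ℝ) (b : Fin p → ℝ),
        C k = {x | ∀ l, ∑ j, a l j * x j ≤ b l}) ∧
      ∃ (A : Matrix (Fin n) (Fin n) ℝ) (c : Fin n → ℝ),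
        ∀ x ∈ C k, g x = fun i => (∑ j, A i j * x j) + c i

/-!
Order-preserving, additively homogeneous maps are nonexpansive in the sup norm. For `0 < s ≤ 1`
nonexpansiveness gives a fixed point `x s` of `x ↦ g ((1 - s) • x)`, with `s • x s` bounded. As
`s → 0`, the point `(1 - s) • x s` returns infinitely often to a single polyhedron on which `g` is
affine; there Cramer's rule makes `s • x s` a bounded rational function of `s`, so that
`x s = s⁻¹ • a + b + o(1)`. Hence `g (s⁻¹ • a + (b - a))` is `o(1)`-close to
`(s⁻¹ + 1) • a + (b - a)`, and since `g` is eventually affine along half-lines,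
`t ↦ t • a + (b - a)` is an invariant half-line (Kohlberg). Its slope is the cycle time `η`.

Invariant half-lines of slope `η` correspond to fixed points of `ḡ`, which is again monotone,
nonexpansive and convex, and `ḡ v ≤ v`. The iterates `ḡ^[k] v` decrease and stay bounded, because a
fixed point exists, so they converge to a fixed point. For `u` fixed and `ḡ z ≤ z`, every
subgradient `M` of `ḡ` at `u` satisfies `M (z - u) ≤ z - u`. The minimum principle then makes
`z - u` constant on each recurrence class of `M`, so `ḡ z = z` at critical nodes, and a negative
minimum of `z - u` would be attained on a whole recurrence class, so `u ≤ z` as soon as this holds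
at critical nodes.
-/

open scoped Matrix Polynomial

/-- The half-line `t ↦ t • a + u` is invariant under `g`. -/
def IsInvariantHalfLine {E : Type*} [AddCommGroup E] [Module ℝ E] (g : E → E) (a u : E) : Prop :=
  ∀ᶠ t : ℝ in atTop, g (t • a + u) = (t + 1) • a + u

/-- `gbar` is the map `ḡ` attached to `g` and the slope `η`: the pointwise limit of `g`
recentered along the half-lines of slope `η`. -/
def IsRecenteredLimit {E : Type*} [AddCommGroup E] [Module ℝ E] [TopologicalSpace E]
    (g : E → E) (η : E) (gbar : E → E) : Prop :=
  ∀ y, Tendsto (fun t : ℝ => g (t • η + y) - (t + 1) • η) atTop (𝓝 (gbar y))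

/-! ### Nonnegative matrices and recurrence classes -/

theorem eq_of_sum_mul_le_sum_mul_const {ι : Type*} {s : Finset ι} {w f : ι → ℝ} {c : ℝ}
    (hw : ∀ i ∈ s, 0 ≤ w i) (hf : ∀ i ∈ s, c ≤ f i)
    (hsum : ∑ i ∈ s, w i * f i ≤ ∑ i ∈ s, w i * c) {i : ι} (hi : i ∈ s) (hpos : 0 < w i) :
    f i = c := by
  have hle : ∀ j ∈ s, w j * c ≤ w j * f j :=
    fun j hj => mul_le_mul_of_nonneg_left (hf j hj) (hw j hj)
  have heq := (Finset.sum_eq_sum_iff_of_le hle).1 (le_antisymm (Finset.sum_le_sum hle) hsum) i hi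
  exact (mul_left_cancel₀ hpos.ne' heq).symm

theorem sum_mul_eq_dotProduct_of_pos_imp_mem {ι : Type*} [Fintype ι] {F : Finset ι} {w : ι → ℝ}
    (hw : ∀ j, 0 ≤ w j) (hF : ∀ j, 0 < w j → j ∈ F) (f : ι → ℝ) :
    ∑ j ∈ F, w j * f j = w ⬝ᵥ f := by
  refine Finset.sum_subset F.subset_univ fun j _ hj => ?_
  rw [le_antisymm (not_lt.1 (mt (hF j) hj)) (hw j), zero_mul]

theorem exists_closed_stronglyConnected_subset {α : Type*} (r : α → α → Prop) {S : Finset α}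
    (hne : S.Nonempty) (hcl : ∀ a ∈ S, ∀ b, r a b → b ∈ S) :
    ∃ F ⊆ S, F.Nonempty ∧ (∀ a ∈ F, ∀ b ∈ F, Relation.ReflTransGen r a b) ∧
      ∀ a ∈ F, ∀ b, r a b → b ∈ F := by
  classical
  obtain ⟨F, hFS, ⟨hFne, hFcl⟩, hmin⟩ := exists_minimal_le_of_wellFoundedLT
    (fun F : Finset α => F.Nonempty ∧ ∀ a ∈ F, ∀ b, r a b → b ∈ F) S ⟨hne, hcl⟩
  refine ⟨F, hFS, hFne, fun a ha b hb => ?_, hFcl⟩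
  have hreach : F ⊆ F.filter (Relation.ReflTransGen r a) := by
    refine hmin ⟨⟨a, Finset.mem_filter.2 ⟨ha, .refl⟩⟩, fun c hc d hcd => ?_⟩
      (Finset.filter_subset _ _)
    obtain ⟨hcF, hac⟩ := Finset.mem_filter.1 hc
    exact Finset.mem_filter.2 ⟨hFcl c hcF d hcd, hac.tail hcd⟩
  exact (Finset.mem_filter.1 (hreach hb)).2

section Matrices

variable {n : ℕ} {M : Matrix (Fin n) (Fin n) ℝ} {F : Finset (Fin n)} {f : Fin n → ℝ}

theorem IsRecClass.apply_eq_of_mulVec_le (hF : IsRecClass M F) (hM : ∀ i j, 0 ≤ M i j)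
    (hf : ∀ i ∈ F, (M *ᵥ f) i ≤ f i) {i j : Fin n} (hi : i ∈ F) (hj : j ∈ F) : f i = f j := by
  obtain ⟨hne, hconn, hcl, hrow⟩ := hF
  obtain ⟨m, hmF, hmin⟩ := F.exists_min_image f hne
  have hprop : ∀ a ∈ F, f a = f m → ∀ b, 0 < M a b → f b = f m := by
    intro a ha ham b hab
    refine eq_of_sum_mul_le_sum_mul_const (fun k _ => hM a k) hmin ?_ (hcl a ha b hab) hab
    rw [← Finset.sum_mul, hrow a ha, one_mul, ← ham,
      sum_mul_eq_dotProduct_of_pos_imp_mem (hM a) (hcl a ha)]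
    exact hf a ha
  have hreach : ∀ b, Relation.ReflTransGen (fun a b => 0 < M a b) m b → b ∈ F ∧ f b = f m := by
    intro b hb
    induction hb with
    | refl => exact ⟨hmF, rfl⟩
    | tail _ hab ih => exact ⟨hcl _ ih.1 _ hab, hprop _ ih.1 ih.2 _ hab⟩
  rw [(hreach i (hconn m hmF i hi)).2, (hreach j (hconn m hmF j hj)).2]

theorem IsRecClass.mulVec_apply_eq (hF : IsRecClass M F) (hM : ∀ i j, 0 ≤ M i j)
    (hf : ∀ i ∈ F, (M *ᵥ f) i ≤ f i) {i : Fin n} (hi : i ∈ F) : (M *ᵥ f) i = f i :=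
  calc (M *ᵥ f) i = ∑ j ∈ F, M i j * f j :=
        (sum_mul_eq_dotProduct_of_pos_imp_mem (hM i) (hF.2.2.1 i hi) f).symm
    _ = ∑ j ∈ F, M i j * f i :=
        Finset.sum_congr rfl fun j hj => by rw [hF.apply_eq_of_mulVec_le hM hf hj hi]
    _ = f i := by rw [← Finset.sum_mul, hF.2.2.2 i hi, one_mul]

-- The set where `f` attains its minimum is closed under the arcs of `M` and has row sums `1`.
theorem exists_isRecClass_neg_of_mulVec_le (hM : ∀ i j, 0 ≤ M i j) (hrow : ∀ i, ∑ j, M i j ≤ 1)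
    (hf : M *ᵥ f ≤ f) (hneg : ∃ i, f i < 0) : ∃ F, IsRecClass M F ∧ ∀ i ∈ F, f i < 0 := by
  obtain ⟨i₀, hi₀⟩ := hneg
  obtain ⟨m, -, hmin⟩ := Finset.univ.exists_min_image f ⟨i₀, Finset.mem_univ i₀⟩
  have hmneg : f m < 0 := (hmin i₀ (Finset.mem_univ i₀)).trans_lt hi₀
  have hle : ∀ i, f i = f m → ∑ j, M i j * f j ≤ f m := fun i hi => (hf i).trans_eq hi
  have hclosed : ∀ i, f i = f m → ∀ j, 0 < M i j → f j = f m := by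
    intro i hi j hij
    refine eq_of_sum_mul_le_sum_mul_const (fun k _ => hM i k) hmin ?_ (Finset.mem_univ j) hij
    rw [← Finset.sum_mul]
    exact (hle i hi).trans (le_mul_of_le_one_left hmneg.le (hrow i))
  have hrow_one : ∀ i, f i = f m → ∑ j, M i j = 1 := by
    intro i hi
    have hsum : (∑ j, M i j) * f m ≤ 1 * f m := by
      rw [one_mul, Finset.sum_mul]
      exact (Finset.sum_le_sum fun j hj =>
        mul_le_mul_of_nonneg_left (hmin j hj) (hM i j)).trans (hle i hi)
    exact (hrow i).antisymm ((mul_le_mul_right_of_neg hmneg).1 hsum)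
  obtain ⟨F, hFS, hne, hconn, hcl⟩ := exists_closed_stronglyConnected_subset
    (fun i j => 0 < M i j) (S := {i | f i = f m}) ⟨m, by simp⟩ (by simpa using hclosed)
  have hFmin : ∀ i ∈ F, f i = f m := fun i hi => by simpa using hFS hi
  refine ⟨F, ⟨hne, hconn, hcl, fun i hi => ?_⟩, fun i hi => (hFmin i hi).trans_lt hmneg⟩
  simpa [hrow_one i (hFmin i hi), dotProduct] using
    sum_mul_eq_dotProduct_of_pos_imp_mem (hM i) (hcl i hi) 1

end Matrices

/-! ### Subdifferentials and critical nodes -/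

theorem exists_supporting_continuousLinearMap {E : Type*} [AddCommGroup E] [Module ℝ E]
    [TopologicalSpace E] [IsTopologicalAddGroup E] [ContinuousSMul ℝ E] {φ : E → ℝ}
    (hcont : Continuous φ) (hconv : ConvexOn ℝ Set.univ φ) (u : E) :
    ∃ f : E →L[ℝ] ℝ, ∀ x, φ u + f (x - u) ≤ φ x := by
  have hopen : IsOpen {p : E × ℝ | p.1 ∈ Set.univ ∧ φ p.1 < p.2} := by
    simp only [Set.mem_univ, true_and]
    exact isOpen_lt (hcont.comp continuous_fst) continuous_snd
  obtain ⟨L, hL⟩ := geometric_hahn_banach_point_open (x := (u, φ u))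
    hconv.convex_strict_epigraph hopen (by simp)
  have hsplit : ∀ x s, L (x, s) = L (x, 0) + s * L (0, 1) := by
    intro x s
    rw [← smul_eq_mul, ← map_smul, ← map_add]
    simp
  have hvert : 0 < L (0, 1) := by
    have := hL (u, φ u + 1) (by simp)
    rw [hsplit, hsplit u (φ u + 1)] at this
    linarith
  refine ⟨-(L (0, 1))⁻¹ • L.comp (.inl ℝ E ℝ), fun x => le_of_forall_gt fun s hs => ?_⟩
  have hlt := hL (x, s) (by simpa using hs)
  have hsub : L (x - u, 0) = L (x, 0) - L (u, 0) := by rw [← map_sub]; simp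
  rw [hsplit, hsplit x s] at hlt
  change φ u + -(L (0, 1))⁻¹ * L (x - u, 0) < s
  rw [hsub]
  field_simp
  linarith

section Subdiff

variable {n : ℕ} {h : (Fin n → ℝ) → (Fin n → ℝ)} {u v z : Fin n → ℝ}
  {M : Matrix (Fin n) (Fin n) ℝ}

theorem Subdiff.nonempty_s10 (hcont : Continuous h)
    (hconv : ∀ i, ConvexOn ℝ Set.univ (fun x => h x i)) (u : Fin n → ℝ) :
    (Subdiff h u).Nonempty := by
  choose f hf using fun i =>
    exists_supporting_continuousLinearMap ((continuous_apply i).comp hcont) (hconv i) u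
  refine ⟨LinearMap.toMatrix' (LinearMap.pi fun i => (f i).toLinearMap), fun x i => ?_⟩
  rw [LinearMap.toMatrix'_mulVec]
  exact hf i x

theorem Subdiff.entry_nonneg (hmono : Monotone h) (hM : M ∈ Subdiff h u) (i j : Fin n) :
    0 ≤ M i j := by
  have hsub := hM (u - Pi.single j 1) i
  have hle := hmono (sub_le_self u (Pi.single_nonneg.2 zero_le_one : 0 ≤ Pi.single j (1 : ℝ))) i
  rw [sub_sub_cancel_left, Matrix.mulVec_neg, Matrix.mulVec_single_one] at hsub
  simp only [Pi.neg_apply, Matrix.col_apply] at hsub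
  linarith

theorem Subdiff.row_sum_le_one_s10 (hlip : LipschitzWith 1 h) (hM : M ∈ Subdiff h u) (i : Fin n) :
    ∑ j, M i j ≤ 1 := by
  have hsub := hM (u + 1) i
  have hdist : h (u + 1) i - h u i ≤ 1 :=
    calc h (u + 1) i - h u i ≤ dist (h (u + 1)) (h u) :=
          (le_abs_self _).trans (dist_le_pi_dist (h (u + 1)) (h u) i)
      _ ≤ dist (u + 1) u := by simpa using hlip.dist_le_mul (u + 1) u
      _ ≤ 1 := by
          rw [dist_eq_norm, add_sub_cancel_left]
          exact (pi_norm_le_iff_of_nonneg zero_le_one).2 fun _ => by simp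
  have hone : (M *ᵥ 1) i = ∑ j, M i j := by simp [Matrix.mulVec, dotProduct]
  rw [add_sub_cancel_left, hone] at hsub
  linarith

theorem Subdiff.mulVec_sub_le (hM : M ∈ Subdiff h u) (hu : h u = u) (hz : h z ≤ z) :
    M *ᵥ (z - u) ≤ z - u := by
  intro i
  have hsub := (hM z i).trans (hz i)
  rw [hu] at hsub
  exact le_sub_iff_add_le'.2 hsub

theorem IsCritical.apply_eq (hmono : Monotone h) (hv : h v ≤ v) {i : Fin n}
    (hi : IsCritical h i) : h v i = v i := by
  obtain ⟨u, hu, M, hM, F, hF, hiF⟩ := hi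
  have hharm : (M *ᵥ (v - u)) i = (v - u) i :=
    hF.mulVec_apply_eq (Subdiff.entry_nonneg hmono hM)
      (fun j _ => Subdiff.mulVec_sub_le hM hu hv j) hiF
  have hsub := hM v i
  rw [hharm, hu, Pi.sub_apply, add_sub_cancel] at hsub
  exact (hv i).antisymm hsub

theorem IsCritical.iterate_apply_eq (hmono : Monotone h) (hv : h v ≤ v) {i : Fin n}
    (hi : IsCritical h i) (k : ℕ) : h^[k] v i = v i := by
  induction k with
  | zero => rfl
  | succ k ih =>
    have hsuper : h (h^[k] v) ≤ h^[k] v := by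
      rw [← Function.iterate_succ_apply' h k v, Function.iterate_succ_apply]
      exact hmono.iterate k hv
    rw [Function.iterate_succ_apply', hi.apply_eq hmono hsuper, ih]

theorem le_of_le_on_isCritical_s10 (hmono : Monotone h) (hlip : LipschitzWith 1 h)
    (hconv : ∀ i, ConvexOn ℝ Set.univ (fun x => h x i)) (hu : h u = u) (hz : h z ≤ z)
    (hcrit : ∀ i, IsCritical h i → u i ≤ z i) : u ≤ z := by
  obtain ⟨M, hM⟩ := Subdiff.nonempty_s10 hlip.continuous hconv u
  by_contra hlt
  obtain ⟨F, hF, hneg⟩ := exists_isRecClass_neg_of_mulVec_le (Subdiff.entry_nonneg hmono hM)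
    (Subdiff.row_sum_le_one_s10 hlip hM) (Subdiff.mulVec_sub_le hM hu hz)
    (by simpa [Pi.le_def] using hlt)
  obtain ⟨i, hi⟩ := hF.1
  exact (sub_neg.1 (hneg i hi)).not_ge (hcrit i ⟨u, hu, M, hM, F, hF, hi⟩)

end Subdiff

/-! ### Nonexpansive maps -/

theorem lipschitzWith_one_of_monotone_of_map_const_add {ι κ : Type*} [Fintype ι] [Fintype κ]
    {h : (ι → ℝ) → (κ → ℝ)} (hmono : Monotone h)
    (hadd : ∀ (c : ℝ) (x : ι → ℝ), h (fun i => c + x i) = fun i => c + h x i) :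
    LipschitzWith 1 h := by
  have hle : ∀ x y i, h x i - h y i ≤ dist x y := by
    intro x y i
    have hxy : x ≤ fun j => dist x y + y j := fun j =>
      sub_le_iff_le_add.1 ((le_abs_self _).trans (dist_le_pi_dist x y j))
    have hmap := hmono hxy i
    rw [hadd] at hmap
    exact sub_le_iff_le_add.2 hmap
  refine LipschitzWith.mk_one fun x y => (dist_pi_le_iff dist_nonneg).2 fun i => ?_
  exact abs_sub_le_iff.2 ⟨hle x y i, dist_comm x y ▸ hle y x i⟩

theorem exists_tendsto_iterate_of_apply_le {ι : Type*} [Fintype ι] {h : (ι → ℝ) → (ι → ℝ)}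
    {u v : ι → ℝ} (hmono : Monotone h) (hlip : LipschitzWith 1 h) (hu : h u = u) (hv : h v ≤ v) :
    ∃ z, Tendsto (fun k : ℕ => h^[k] v) atTop (𝓝 z) := by
  have hball : ∀ k, h^[k] v ∈ Metric.closedBall u (dist v u) := by
    intro k
    have hdist := (hlip.iterate k).dist_le_mul v u
    rwa [Function.iterate_fixed hu, one_pow, NNReal.coe_one, one_mul] at hdist
  have hbdd : BddBelow (Set.range fun k => h^[k] v) :=
    (Metric.isBounded_closedBall.subset (Set.range_subset_iff.2 hball)).bddBelow
  exact ⟨_, tendsto_atTop_ciInf (hmono.antitone_iterate_of_map_le hv) hbdd⟩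

theorem exists_discounted_fixedPoint {E : Type*} [NormedAddCommGroup E] [NormedSpace ℝ E]
    [CompleteSpace E] {g : E → E} (hlip : LipschitzWith 1 g) {s : ℝ} (hs : 0 < s) (hs1 : s ≤ 1) :
    ∃ x, g ((1 - s) • x) = x ∧ ‖s • x‖ ≤ ‖g 0‖ := by
  have hcontr : ContractingWith ⟨1 - s, sub_nonneg.2 hs1⟩ fun x => g ((1 - s) • x) := by
    refine ⟨NNReal.coe_lt_coe.1 (sub_lt_self 1 hs), LipschitzWith.of_dist_le_mul fun x y => ?_⟩
    refine (hlip.dist_le_mul _ _).trans_eq ?_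
    rw [NNReal.coe_one, one_mul, dist_smul₀, Real.norm_of_nonneg (sub_nonneg.2 hs1)]
    rfl
  obtain ⟨x, hx⟩ : ∃ x, g ((1 - s) • x) = x := ⟨_, hcontr.fixedPoint_isFixedPt⟩
  refine ⟨x, hx, ?_⟩
  have hdist : ‖x - g 0‖ ≤ (1 - s) * ‖x‖ := by
    have := hlip.dist_le_mul ((1 - s) • x) 0
    rwa [hx, NNReal.coe_one, one_mul, dist_zero_right, norm_smul,
      Real.norm_of_nonneg (sub_nonneg.2 hs1), dist_eq_norm] at this
  rw [norm_smul, Real.norm_of_nonneg hs.le]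
  linarith [norm_sub_norm_le x (g 0)]

/-! ### Polyhedral maps along half-lines -/

theorem eq_zero_and_eq_of_tendsto_smul_add {E α : Type*} [NormedAddCommGroup E] [NormedSpace ℝ E]
    {l : Filter α} [NeBot l] {τ : α → ℝ} {d e c : E} (hτ : Tendsto τ l atTop)
    (hlim : Tendsto (fun s => τ s • d + e) l (𝓝 c)) : d = 0 ∧ e = c := by
  have hscaled : Tendsto (fun s => (τ s)⁻¹ • (τ s • d + e - e)) l (𝓝 0) := by
    simpa using hτ.inv_tendsto_atTop.smul (hlim.sub_const e)
  have hd : d = 0 := by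
    refine tendsto_nhds_unique (tendsto_const_nhds.congr' ?_) hscaled
    filter_upwards [hτ.eventually_ne_atTop 0] with s hs
    rw [add_sub_cancel_right, inv_smul_smul₀ hs]
  subst hd
  simp only [smul_zero, zero_add] at hlim
  exact ⟨rfl, tendsto_nhds_unique tendsto_const_nhds hlim⟩

namespace IsPolyhedralMap

variable {n : ℕ} {g : (Fin n → ℝ) → (Fin n → ℝ)}

theorem exists_frequently_convex_affine {α : Type*} (hpoly : IsPolyhedralMap g) {l : Filter α}
    [NeBot l] (f : α → Fin n → ℝ) :
    ∃ C : Set (Fin n → ℝ), Convex ℝ C ∧ (∃ᶠ s in l, f s ∈ C) ∧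
      ∃ (A : Matrix (Fin n) (Fin n) ℝ) (c : Fin n → ℝ), ∀ x ∈ C, g x = A *ᵥ x + c := by
  obtain ⟨m, C, hcover, hC⟩ := hpoly
  obtain ⟨k, hk⟩ : ∃ k, ∃ᶠ s in l, f s ∈ C k := by
    refine frequently_exists.1 (Eventually.of_forall fun s => ?_).frequently
    simpa only [← hcover, Set.mem_iUnion] using Set.mem_univ (f s)
  obtain ⟨⟨p, a, b, hCk⟩, haff⟩ := hC k
  refine ⟨C k, ?_, hk, haff⟩
  have hinter : C k = ⋂ l, {x | a l ⬝ᵥ x ≤ b l} := by rw [hCk]; ext x; simp [dotProduct]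
  rw [hinter]
  exact convex_iInter fun l => convex_halfSpace_le (dotProductBilin ℝ ℝ (a l)).isLinear (b l)

theorem exists_eventually_eq_smul_add (hpoly : IsPolyhedralMap g) (a u : Fin n → ℝ) :
    ∃ p q : Fin n → ℝ, ∀ᶠ t : ℝ in atTop, g (t • a + u) = t • p + q := by
  obtain ⟨C, hconv, hfreq, A, c, hA⟩ :=
    hpoly.exists_frequently_convex_affine (l := atTop) fun t : ℝ => t • a + u
  have hord : ((fun t : ℝ => t • a + u) ⁻¹' C).OrdConnected :=
    ((hconv.translate_preimage_left u).linear_preimage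
      (LinearMap.toSpanSingleton ℝ (Fin n → ℝ) a)).ordConnected
  obtain ⟨T, hT⟩ := hfreq.exists
  refine ⟨A *ᵥ a, A *ᵥ u + c, ?_⟩
  filter_upwards [eventually_ge_atTop T] with t ht
  obtain ⟨s, hts, hs⟩ := frequently_atTop.1 hfreq t
  rw [hA _ (hord.out hT hs ⟨ht, hts⟩), Matrix.mulVec_add, Matrix.mulVec_smul, add_assoc]

theorem isInvariantHalfLine_of_tendsto {α : Type*} {l : Filter α} [NeBot l] {τ : α → ℝ}
    {a u : Fin n → ℝ} (hpoly : IsPolyhedralMap g) (hτ : Tendsto τ l atTop)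
    (hlim : Tendsto (fun s => g (τ s • a + u) - (τ s + 1) • a) l (𝓝 u)) :
    IsInvariantHalfLine g a u := by
  obtain ⟨p, q, hpq⟩ := hpoly.exists_eventually_eq_smul_add a u
  have haffine : Tendsto (fun s => τ s • (p - a) + (q - a)) l (𝓝 u) := by
    refine hlim.congr' ?_
    filter_upwards [hτ.eventually hpq] with s hs
    rw [hs]
    module
  obtain ⟨hp, hq⟩ := eq_zero_and_eq_of_tendsto_smul_add hτ haffine
  filter_upwards [hpq] with t ht
  rw [ht, sub_eq_zero.1 hp, sub_eq_iff_eq_add.1 hq]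
  module

end IsPolyhedralMap

/-! ### Solutions of linear systems with a polynomial parameter -/

theorem exists_polynomial_solution_of_smul_mulVec {R ι : Type*} [CommRing R] [Fintype ι]
    [DecidableEq ι] (A : Matrix ι ι R) (c : ι → R) :
    ∃ p : ι → R[X], ∀ (r : R) (x : ι → R), x = r • A *ᵥ x + c →
      ∀ i, A.charpolyRev.eval r * x i = (p i).eval r := by
  set N : Matrix ι ι R[X] := 1 - (Polynomial.X : R[X]) • A.map Polynomial.C with hN
  refine ⟨N.adjugate *ᵥ fun i => Polynomial.C (c i), fun r x hx i => ?_⟩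
  have heval : (Polynomial.evalRingHom r).mapMatrix N = 1 - r • A := by
    ext i j
    by_cases hij : i = j <;> simp [hN, hij, mul_comm r]
  have hdet : A.charpolyRev.eval r = (1 - r • A).det := by
    rw [← heval, ← RingHom.map_det]
    rfl
  have hsolve : (1 - r • A) *ᵥ x = c := by
    rw [Matrix.sub_mulVec, Matrix.one_mulVec, Matrix.smul_mulVec]
    exact sub_eq_iff_eq_add'.2 hx
  have hadj : ((1 - r • A).det • x) i = ((1 - r • A).adjugate *ᵥ c) i := by
    rw [← hsolve, Matrix.mulVec_mulVec, Matrix.adjugate_mul, Matrix.smul_mulVec,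
      Matrix.one_mulVec]
  rw [hdet, ← smul_eq_mul, ← Pi.smul_apply, hadj, ← heval, ← RingHom.map_adjugate,
    ← Polynomial.coe_evalRingHom, RingHom.map_mulVec]
  simp [Function.comp_def]

theorem exists_polynomial_eq_of_X_pow_mul_eval_mul_eq {l : Filter ℝ} [NeBot l]
    (hl : l ≤ 𝓝[≠] 0) {y : ℝ → ℝ} (hy : IsBoundedUnder (· ≤ ·) l (norm ∘ y)) (Q : ℝ[X]) :
    ∀ (m : ℕ) (p : ℝ[X]), (∀ᶠ s in l, (Polynomial.X ^ m * Q).eval s * y s = p.eval s) →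
      ∃ P : ℝ[X], ∀ᶠ s in l, Q.eval s * y s = P.eval s
  | 0, p, hp => ⟨p, by simpa using hp⟩
  | m + 1, p, hp => by
    have hzero : p.eval 0 = 0 := by
      have hleft : Tendsto (fun s => (Polynomial.X ^ (m + 1) * Q).eval s) l (𝓝 0) := by
        refine ((Polynomial.continuous _).tendsto' 0 0 (by simp)).mono_left
          (hl.trans nhdsWithin_le_nhds)
      have hright : Tendsto (fun s => p.eval s) l (𝓝 (p.eval 0)) :=
        (p.continuous.tendsto 0).mono_left (hl.trans nhdsWithin_le_nhds)
      exact tendsto_nhds_unique hright ((hleft.zero_mul_isBoundedUnder_le hy).congr' hp)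
    obtain ⟨p', rfl⟩ := Polynomial.X_dvd_iff.2 (p.coeff_zero_eq_eval_zero.trans hzero)
    refine exists_polynomial_eq_of_X_pow_mul_eval_mul_eq hl hy Q m p' ?_
    filter_upwards [hp, hl self_mem_nhdsWithin] with s hs hs0
    refine mul_left_cancel₀ (hs0 : s ≠ 0) ?_
    simpa only [pow_succ', Polynomial.eval_mul, Polynomial.eval_X, mul_assoc] using hs

theorem exists_tendsto_slope_of_eval_mul_eq {l : Filter ℝ} [NeBot l] (hl : l ≤ 𝓝[≠] 0)
    {y : ℝ → ℝ} (hy : IsBoundedUnder (· ≤ ·) l (norm ∘ y)) {p q : ℝ[X]} (hq : q ≠ 0)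
    (hpq : ∀ᶠ s in l, q.eval s * y s = p.eval s) :
    ∃ a b : ℝ, Tendsto (fun s => (y s - a) / s) l (𝓝 b) := by
  obtain ⟨Q, hQ, hdvd⟩ := Polynomial.exists_eq_pow_rootMultiplicity_mul_and_not_dvd q hq 0
  rw [map_zero, sub_zero] at hQ hdvd
  have hQ0 : Q.eval 0 ≠ 0 := fun h => hdvd
    (Polynomial.X_dvd_iff.2 (Q.coeff_zero_eq_eval_zero.trans h))
  rw [hQ] at hpq
  obtain ⟨P, hP⟩ := exists_polynomial_eq_of_X_pow_mul_eval_mul_eq hl hy Q _ p hpq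
  have hderiv := ((P.hasDerivAt 0).div (Q.hasDerivAt 0) hQ0).tendsto_slope.mono_left hl
  refine ⟨P.eval 0 / Q.eval 0, _, hderiv.congr' ?_⟩
  have hQne : ∀ᶠ s in l, Q.eval s ≠ 0 :=
    (hl.trans nhdsWithin_le_nhds) (Q.continuous.continuousAt.eventually_ne hQ0)
  filter_upwards [hP, hQne] with s hs hQs
  rw [slope_def_field, sub_zero, Pi.div_apply, Pi.div_apply, eq_div_of_mul_eq hQs
    ((mul_comm _ _).trans hs)]

theorem exists_tendsto_sub_inv_smul_of_eq_mulVec {ι : Type*} [Fintype ι] {A : Matrix ι ι ℝ}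
    {c : ι → ℝ} {l : Filter ℝ} [NeBot l] (hl : l ≤ 𝓝[≠] 0) {x : ℝ → ι → ℝ}
    (hx : ∀ᶠ s in l, x s = A *ᵥ ((1 - s) • x s) + c)
    (hbdd : IsBoundedUnder (· ≤ ·) l fun s => ‖s • x s‖) :
    ∃ a b : ι → ℝ, Tendsto (fun s => x s - s⁻¹ • a) l (𝓝 b) := by
  classical
  obtain ⟨p, hp⟩ := exists_polynomial_solution_of_smul_mulVec A c
  set q : ℝ[X] := A.charpolyRev.comp (1 - Polynomial.X) with hq
  have hq0 : q ≠ 0 := by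
    intro h
    simpa [hq] using congrArg (Polynomial.eval 1) h
  have hcoord : ∀ i, ∃ a b : ℝ, Tendsto (fun s => (s * x s i - a) / s) l (𝓝 b) := by
    intro i
    refine exists_tendsto_slope_of_eval_mul_eq hl
      (hbdd.mono_le (Eventually.of_forall fun s => norm_le_pi_norm (s • x s) i)) hq0
      (p := Polynomial.X * (p i).comp (1 - Polynomial.X)) ?_
    filter_upwards [hx] with s hs
    rw [Matrix.mulVec_smul] at hs
    simp only [hq, Polynomial.eval_comp, Polynomial.eval_sub, Polynomial.eval_one,
      Polynomial.eval_mul, Polynomial.eval_X]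
    rw [mul_left_comm, hp (1 - s) (x s) hs i]
  choose a b hab using hcoord
  refine ⟨a, b, tendsto_pi_nhds.2 fun i => (hab i).congr' ?_⟩
  filter_upwards [hl self_mem_nhdsWithin] with s hs
  rw [sub_div, mul_div_cancel_left₀ _ hs, Pi.sub_apply, Pi.smul_apply, smul_eq_mul,
    inv_mul_eq_div]

/-! ### Existence of an invariant half-line -/

theorem tendsto_sub_smul_of_discounted_expansion {E α : Type*} [NormedAddCommGroup E]
    [NormedSpace ℝ E] {g : E → E} (hlip : LipschitzWith 1 g) {l : Filter α} {σ : α → ℝ}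
    (hσ : Tendsto σ l (𝓝[≠] 0)) {x : α → E} {a b : E}
    (hfix : ∀ᶠ s in l, g ((1 - σ s) • x s) = x s)
    (hexp : Tendsto (fun s => x s - (σ s)⁻¹ • a) l (𝓝 b)) :
    Tendsto (fun s => g ((σ s)⁻¹ • a + (b - a)) - ((σ s)⁻¹ + 1) • a) l (𝓝 (b - a)) := by
  obtain ⟨hσ0, hσne⟩ := tendsto_nhdsWithin_iff.1 hσ
  have hgap : Tendsto (fun s => (σ s)⁻¹ • a + (b - a) - (1 - σ s) • x s) l (𝓝 0) := by
    have hlim : Tendsto (fun s => b - (1 - σ s) • (x s - (σ s)⁻¹ • a)) l (𝓝 0) := by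
      simpa using ((hσ0.const_sub 1).smul hexp).const_sub b
    refine hlim.congr' ?_
    filter_upwards [hσne] with s hs
    rw [smul_sub, sub_smul 1 (σ s) ((σ s)⁻¹ • a), smul_inv_smul₀ hs]
    module
  have hdiff : Tendsto (fun s => g ((σ s)⁻¹ • a + (b - a)) - x s) l (𝓝 0) := by
    refine squeeze_zero_norm' ?_ (tendsto_zero_iff_norm_tendsto_zero.1 hgap)
    filter_upwards [hfix] with s hs
    simpa [hs] using hlip.norm_sub_le ((σ s)⁻¹ • a + (b - a)) ((1 - σ s) • x s)
  refine ((hdiff.add (hexp.sub_const a)).congr fun s => ?_).trans_eq ?_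
  · module
  · rw [zero_add]

-- Kohlberg's theorem.
theorem IsPolyhedralMap.exists_isInvariantHalfLine {n : ℕ} {g : (Fin n → ℝ) → (Fin n → ℝ)}
    (hpoly : IsPolyhedralMap g) (hlip : LipschitzWith 1 g) :
    ∃ a u, IsInvariantHalfLine g a u := by
  choose! x hfix hbound using fun s : ℝ => fun hs : s ∈ Set.Ioc 0 1 =>
    exists_discounted_fixedPoint hlip hs.1 hs.2
  obtain ⟨C, -, hfreq, A, c, hA⟩ :=
    hpoly.exists_frequently_convex_affine (l := 𝓝[>] 0) fun s : ℝ => (1 - s) • x s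
  set l : Filter ℝ := 𝓝[>] 0 ⊓ 𝓟 {s | (1 - s) • x s ∈ C}
  have : NeBot l := frequently_mem_iff_neBot.1 hfreq
  have hlpos : l ≤ 𝓝[>] 0 := inf_le_left
  have hl : l ≤ 𝓝[≠] 0 := hlpos.trans (nhdsGT_le_nhdsNE 0)
  have hIoc : ∀ᶠ s in l, s ∈ Set.Ioc (0 : ℝ) 1 := hlpos (Ioc_mem_nhdsGT one_pos)
  have hfixl : ∀ᶠ s in l, g ((1 - s) • x s) = x s := hIoc.mono hfix
  have haffine : ∀ᶠ s in l, x s = A *ᵥ ((1 - s) • x s) + c := by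
    filter_upwards [hfixl, mem_inf_of_right (mem_principal_self _)] with s hs hsC
    rw [← hA _ hsC, hs]
  obtain ⟨a, b, hab⟩ := exists_tendsto_sub_inv_smul_of_eq_mulVec hl haffine
    (isBoundedUnder_of_eventually_le (hIoc.mono hbound))
  exact ⟨a, b - a, hpoly.isInvariantHalfLine_of_tendsto (tendsto_inv_nhdsGT_zero.mono_left hlpos)
    (tendsto_sub_smul_of_discounted_expansion hlip (tendsto_id'.2 hl) hfixl hab)⟩

theorem IsInvariantHalfLine.exists_tendsto_iterate_div {ι : Type*} {g : (ι → ℝ) → (ι → ℝ)}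
    {a u : ι → ℝ} (h : IsInvariantHalfLine g a u) :
    ∃ y, Tendsto (fun k : ℕ => fun i => g^[k] y i / k) atTop (𝓝 a) := by
  obtain ⟨T, hT⟩ := eventually_atTop.1 h
  have hiter : ∀ k : ℕ, g^[k] (T • a + u) = (T + k) • a + u := by
    intro k
    induction k with
    | zero => simp
    | succ k ih =>
      rw [Function.iterate_succ_apply', ih, hT _ (le_add_of_nonneg_right k.cast_nonneg),
        Nat.cast_succ, add_assoc]
  refine ⟨T • a + u, tendsto_pi_nhds.2 fun i => ?_⟩
  have hlim : Tendsto (fun k : ℕ => (T * a i + u i) / (k : ℝ) + a i) atTop (𝓝 (a i)) := by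
    simpa using (tendsto_const_div_atTop_nhds_zero_nat (T * a i + u i)).add_const (a i)
  refine hlim.congr' ?_
  filter_upwards [eventually_ne_atTop 0] with k hk
  simp only [hiter, Pi.add_apply, Pi.smul_apply, smul_eq_mul]
  field_simp
  ring

/-! ### The recentered limit -/

namespace IsRecenteredLimit

section Module

variable {E : Type*} [AddCommGroup E] [Module ℝ E] [TopologicalSpace E] {g gbar : E → E} {η u : E}

theorem apply_eq_self [T2Space E] (h : IsRecenteredLimit g η gbar)
    (hu : IsInvariantHalfLine g η u) : gbar u = u := by
  refine tendsto_nhds_unique (h u) (tendsto_const_nhds.congr' ?_)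
  filter_upwards [hu] with t ht
  rw [ht, add_sub_cancel_left]

theorem apply_le_self [PartialOrder E] [IsOrderedAddMonoid E] [ClosedIicTopology E]
    (h : IsRecenteredLimit g η gbar)
    (hu : ∀ᶠ t : ℝ in atTop, g (t • η + u) ≤ (t + 1) • η + u) : gbar u ≤ u := by
  refine le_of_tendsto (h u) ?_
  filter_upwards [hu] with t ht
  exact sub_le_iff_le_add'.2 ht

theorem monotone [PartialOrder E] [IsOrderedAddMonoid E] [OrderClosedTopology E]
    (h : IsRecenteredLimit g η gbar) (hg : Monotone g) : Monotone gbar :=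
  isClosed_monotone.mem_of_tendsto (tendsto_pi_nhds.2 h) <| .of_forall fun _ _ _ hxy =>
    sub_le_sub_right (hg (add_le_add_right hxy _)) _

end Module

theorem lipschitzWith {E : Type*} [NormedAddCommGroup E] [NormedSpace ℝ E] {g gbar : E → E}
    {η : E} (h : IsRecenteredLimit g η gbar) {K : NNReal} (hg : LipschitzWith K g) :
    LipschitzWith K gbar :=
  (isClosed_setOfPred_lipschitzWith K).mem_of_tendsto (tendsto_pi_nhds.2 h) <|
    .of_forall fun t => .of_dist_le_mul fun x y => by
      simpa only [dist_sub_right, dist_add_left] using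
        hg.dist_le_mul (t • η + x) (t • η + y)

theorem convexOn {ι : Type*} {g gbar : (ι → ℝ) → (ι → ℝ)} {η : ι → ℝ}
    (h : IsRecenteredLimit g η gbar) {i : ι} (hg : ConvexOn ℝ Set.univ (fun x => g x i)) :
    ConvexOn ℝ Set.univ (fun x => gbar x i) :=
  isClosed_setOfPred_convexOn.mem_of_tendsto
    (tendsto_pi_nhds.2 fun x => tendsto_pi_nhds.1 (h x) i) <| .of_forall fun t => by
      simp only [sub_eq_add_neg]
      exact (hg.translate_right (t • η)).add_const (-((t + 1) • η) i)

theorem isInvariantHalfLine {n : ℕ} {g gbar : (Fin n → ℝ) → (Fin n → ℝ)} {η u : Fin n → ℝ}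
    (h : IsRecenteredLimit g η gbar) (hpoly : IsPolyhedralMap g) (hu : gbar u = u) :
    IsInvariantHalfLine g η u :=
  hpoly.isInvariantHalfLine_of_tendsto (τ := fun t => t) tendsto_id (by simpa only [hu] using h u)

end IsRecenteredLimit

/-! ### Invariant half-lines and critical nodes -/

theorem unique_invariant_halfLine_through_superinvariant_general {n : ℕ}
    {g gbar : (Fin n → ℝ) → (Fin n → ℝ)} {η v : Fin n → ℝ} (hpoly : IsPolyhedralMap g)
    (hconv : ∀ i, ConvexOn ℝ Set.univ (fun x => g x i)) (hmono : Monotone g)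
    (hlip : LipschitzWith 1 g)
    (hχ : ∀ y, Tendsto (fun k : ℕ => fun i => g^[k] y i / k) atTop (𝓝 η))
    (hsup : ∀ᶠ t : ℝ in atTop, g (t • η + v) ≤ (t + 1) • η + v)
    (hgbar : IsRecenteredLimit g η gbar) :
    ∃ z, Tendsto (fun k : ℕ => gbar^[k] v) atTop (𝓝 z) ∧ IsInvariantHalfLine g η z ∧
      (∀ i, IsCritical gbar i → z i = v i) ∧
      ∀ z', IsInvariantHalfLine g η z' → (∀ i, IsCritical gbar i → z' i = v i) → z' = z := by
  obtain ⟨a, u, hau⟩ := hpoly.exists_isInvariantHalfLine hlip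
  obtain ⟨y, hy⟩ := hau.exists_tendsto_iterate_div
  obtain rfl : a = η := tendsto_nhds_unique hy (hχ y)
  have hmono' := hgbar.monotone hmono
  have hlip' := hgbar.lipschitzWith hlip
  have hv : gbar v ≤ v := hgbar.apply_le_self hsup
  obtain ⟨z, hz⟩ := exists_tendsto_iterate_of_apply_le hmono' hlip' (hgbar.apply_eq_self hau) hv
  have hzfix : gbar z = z := isFixedPt_of_tendsto_iterate hz hlip'.continuous.continuousAt
  have hzv : ∀ i, IsCritical gbar i → z i = v i := fun i hi =>
    tendsto_nhds_unique (tendsto_pi_nhds.1 hz i)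
      (tendsto_const_nhds.congr fun k => (hi.iterate_apply_eq hmono' hv k).symm)
  refine ⟨z, hz, hgbar.isInvariantHalfLine hpoly hzfix, hzv, fun z' hz' hz'v => ?_⟩
  have hz'fix := hgbar.apply_eq_self hz'
  have hle {x x' : Fin n → ℝ} := le_of_le_on_isCritical_s10 (u := x) (z := x') hmono' hlip'
    fun i => hgbar.convexOn (hconv i)
  exact le_antisymm (hle hz'fix hzfix.le fun i hi => ((hz'v i hi).trans (hzv i hi).symm).le)
    (hle hzfix hz'fix.le fun i hi => ((hzv i hi).trans (hz'v i hi).symm).le)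

/-- Let `g : ℝⁿ → ℝⁿ` be polyhedral, convex, order-preserving and
additively homogeneous, let `η = χ(g)` be its cycle time (which exists), and let
`t ↦ tη + v` be a super-invariant half-line of `g`.  Define `ḡ : ℝⁿ → ℝⁿ` by
`ḡ(y) = lim_{t→∞} (g(tη + y) − (t+1)η)` (this limit exists), and let `C` be the set of
critical nodes of `ḡ`.  Then there is a unique invariant half-line of `g` coinciding with
`t ↦ tη + v` on `C`, namely `t ↦ tη + z` where `z = lim_{k→∞} ḡ^k(v)`. -/
theorem unique_invariant_halfLine_through_superinvariant
    (n : ℕ) (g : (Fin n → ℝ) → (Fin n → ℝ))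
    (hpoly : IsPolyhedralMap g)
    (hconv : ∀ i, ConvexOn ℝ Set.univ (fun x => g x i))
    (hop : ∀ x y : Fin n → ℝ, x ≤ y → g x ≤ g y)
    (hah : ∀ (lam : ℝ) (x : Fin n → ℝ), g (fun i => lam + x i) = fun i => lam + g x i)
    (η : Fin n → ℝ)
    (hχ : ∀ y : Fin n → ℝ,
      Tendsto (fun k : ℕ => fun i => g^[k] y i / k) atTop (𝓝 η))
    (v : Fin n → ℝ) (T₀ : ℝ)
    (hsup : ∀ t ≥ T₀, g (fun i => t * η i + v i) ≤ fun i => (t + 1) * η i + v i)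
    (gbar : (Fin n → ℝ) → (Fin n → ℝ))
    (hgbar : ∀ y : Fin n → ℝ,
      Tendsto (fun t : ℝ => fun i => g (fun j => t * η j + y j) i - (t + 1) * η i)
        atTop (𝓝 (gbar y))) :
    ∃ z : Fin n → ℝ,
      Tendsto (fun k : ℕ => gbar^[k] v) atTop (𝓝 z) ∧
      (∃ T : ℝ, ∀ t ≥ T,
        g (fun i => t * η i + z i) = fun i => (t + 1) * η i + z i) ∧
      (∀ i : Fin n, IsCritical gbar i → z i = v i) ∧
      ∀ z' : Fin n → ℝ,
        (∃ T : ℝ, ∀ t ≥ T,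
          g (fun i => t * η i + z' i) = fun i => (t + 1) * η i + z' i) →
        (∀ i : Fin n, IsCritical gbar i → z' i = v i) → z' = z := by
  simp only [← eventually_atTop]
  exact unique_invariant_halfLine_through_superinvariant_general hpoly hconv hop
    (lipschitzWith_one_of_monotone_of_map_const_add hop hah) hχ
    (eventually_atTop.2 ⟨T₀, hsup⟩) hgbar
end
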